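/- arXiv:math-ph/0408053 — 6 statements merged into one kernel-verified Lean document; each statement's English description precedes it below -/
import Mathlib

section
/- The bilinear bracket defined on the basis elements Z_{n,m} by formula (e1) is antisymmetric and satisfies the Jacobi identity; hence it makes the vector space L_L into a complex Lie algebra. -/
/- The ladder insertion-elimination Lie algebra `L_L` of Mencattini–Kreimer,
realized as the complex vector space of finitely supported functions `ℕ × ℕ → ℂ`,
with basis elements `Z n m = single (n, m) 1` and the bilinear bracket determined
on basis elements by formula (e1). -/

noncomputable section

/-- The underlying vector space of the ladder insertion-elimination Lie algebra. -/
abbrev LL : Type := (ℕ × ℕ) →₀ ℂ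

/-- The basis element `Z_{n,m}`. -/
def Z (n m : ℕ) : LL := Finsupp.single (n, m) 1

/-- `Θ(k) = 1` if `k ≥ 0`, and `0` otherwise. -/
def theta (k : ℤ) : ℂ := if 0 ≤ k then 1 else 0

/-- The Kronecker delta `δ_{n,m}`. -/
def kdelta (n m : ℕ) : ℂ := if n = m then 1 else 0

/-- Formula (e1) for the bracket `[Z_{n,m}, Z_{l,s}]` on basis elements, where
`p = (n, m)` and `q = (l, s)`.  (The natural subtractions occurring in the indices
are truncated, but every such term is multiplied by a `theta` coefficient which
vanishes whenever truncation would occur.) -/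
def zb (p q : ℕ × ℕ) : LL :=
  theta ((q.1 : ℤ) - p.2) • Z (q.1 - p.2 + p.1) q.2
    - theta ((q.2 : ℤ) - p.1) • Z q.1 (q.2 - p.1 + p.2)
    - theta ((p.1 : ℤ) - q.2) • Z (p.1 - q.2 + q.1) p.2
    + theta ((p.2 : ℤ) - q.1) • Z p.1 (p.2 - q.1 + q.2)
    - kdelta p.2 q.1 • Z p.1 q.2 + kdelta p.1 q.2 • Z q.1 p.2

/-- The bilinear extension of formula (e1) to all of `L_L`. -/
def br (x y : LL) : LL :=
  x.sum fun p a => y.sum fun q b => (a * b) • zb p q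

end

/-!
The six terms of (e1) group into two triples. For any indices exactly one term of the triple
`Θ(l−m) Z_{l−m+n,s} + Θ(m−l) Z_{n,m−l+s} − δ_{m,l} Z_{n,s}` remains after cancellation, and it is
the product of `Z_{n,m} = b^n a^m` and `Z_{l,s} = b^l a^s` in the monoid generated by `a`, `b`
subject to `a b = 1`; the other triple is minus the product in the opposite order. Thus (e1) is the
commutator of the algebra of the bicyclic monoid, and the Lie axioms follow from associativity.
-/

theorem lie_lie_jacobi {L : Type*} [LieRing L] (x y z : L) :
    ⁅⁅x, y⁆, z⁆ + ⁅⁅y, z⁆, x⁆ + ⁅⁅z, x⁆, y⁆ = 0 := by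
  rw [← lie_skew ⁅x, y⁆ z, ← lie_skew ⁅y, z⁆ x, ← lie_skew ⁅z, x⁆ y, ← neg_add, ← neg_add,
    neg_eq_zero]
  exact lie_jacobi z x y

/-- The bicyclic monoid `⟨a, b | a b = 1⟩`, encoded by the exponents of the normal form
`b ^ i * a ^ j` of its elements. -/
structure Bicyclic where
  i : ℕ
  j : ℕ

namespace Bicyclic

/-- Normal forms of the bicyclic monoid as pairs of exponents. -/
def equivProd : Bicyclic ≃ ℕ × ℕ where
  toFun u := (u.i, u.j)
  invFun p := ⟨p.1, p.2⟩

-- Since `a b = 1`, the inner factor `a ^ u.j * b ^ v.i` is `b ^ (v.i - u.j) * a ^ (u.j - v.i)`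
-- with truncated subtraction.
instance : Mul Bicyclic where
  mul u v := ⟨u.i + (v.i - u.j), u.j - v.i + v.j⟩

instance : One Bicyclic where
  one := ⟨0, 0⟩

theorem mk_mul_mk (n m l s : ℕ) : (⟨n, m⟩ * ⟨l, s⟩ : Bicyclic) = ⟨n + (l - m), m - l + s⟩ :=
  rfl

theorem one_eq_mk : (1 : Bicyclic) = ⟨0, 0⟩ :=
  rfl

instance : Monoid Bicyclic where
  mul_assoc := by
    rintro ⟨n, m⟩ ⟨l, s⟩ ⟨k, t⟩
    simp only [mk_mul_mk, mk.injEq]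
    omega
  one_mul := by
    rintro ⟨n, m⟩
    simp only [one_eq_mk, mk_mul_mk, Nat.sub_zero, Nat.zero_sub, Nat.zero_add]
  mul_one := by
    rintro ⟨n, m⟩
    simp only [one_eq_mk, mk_mul_mk, Nat.sub_zero, Nat.zero_sub, Nat.add_zero]

/-- The algebra of the bicyclic monoid as a module of finitely supported functions on pairs of
exponents. -/
noncomputable def algebraEquiv (R : Type*) [Semiring R] :
    (ℕ × ℕ →₀ R) ≃ₗ[R] MonoidAlgebra R Bicyclic :=
  Finsupp.domLCongr equivProd.symm ≪≫ₗ (MonoidAlgebra.coeffLinearEquiv R).symm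

theorem algebraEquiv_single {R : Type*} [Semiring R] (n m : ℕ) (r : R) :
    algebraEquiv R (Finsupp.single (n, m) r) = MonoidAlgebra.single ⟨n, m⟩ r := by
  simp [algebraEquiv, equivProd, MonoidAlgebra.coeffLinearEquiv]

theorem algebraEquiv_Z (n m : ℕ) : algebraEquiv ℂ (Z n m) = MonoidAlgebra.of ℂ Bicyclic ⟨n, m⟩ :=
  algebraEquiv_single n m 1

end Bicyclic

open Bicyclic

theorem kdelta_comm (n m : ℕ) : kdelta n m = kdelta m n := by
  simp only [kdelta, eq_comm]

theorem theta_smul_add_theta_smul_sub_kdelta_smul {M : Type*} [AddCommGroup M] [Module ℂ M]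
    (f : ℕ → ℕ → M) (m l : ℕ) :
    theta ((l : ℤ) - m) • f (l - m) 0 + theta ((m : ℤ) - l) • f 0 (m - l) - kdelta m l • f 0 0 =
      f (l - m) (m - l) := by
  rcases lt_trichotomy m l with h | rfl | h
  · simp [theta, kdelta, h.le, h.ne, h.not_ge, Nat.sub_eq_zero_of_le]
  · simp [theta, kdelta]
  · simp [theta, kdelta, h.le, h.ne', h.not_ge, Nat.sub_eq_zero_of_le]

theorem zb_eq_sub (n m l s : ℕ) :
    zb (n, m) (l, s) = Z (n + (l - m)) (m - l + s) - Z (l + (n - s)) (s - n + m) := by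
  have hnl := theta_smul_add_theta_smul_sub_kdelta_smul (fun i j ↦ Z (n + i) (j + s)) m l
  have hln := theta_smul_add_theta_smul_sub_kdelta_smul (fun i j ↦ Z (l + i) (j + m)) s n
  simp only [Nat.add_zero, Nat.zero_add] at hnl hln
  rw [← hnl, ← hln, kdelta_comm s n, Nat.add_comm n, Nat.add_comm l]
  simp only [zb]
  abel

attribute [local instance] LieRing.ofAssociativeRing

theorem algebraEquiv_zb (p q : ℕ × ℕ) :
    algebraEquiv ℂ (zb p q) = ⁅algebraEquiv ℂ (Z p.1 p.2), algebraEquiv ℂ (Z q.1 q.2)⁆ := by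
  obtain ⟨n, m⟩ := p
  obtain ⟨l, s⟩ := q
  simp only [zb_eq_sub, map_sub, algebraEquiv_Z, Ring.lie_def, ← map_mul, mk_mul_mk]

theorem sum_smul_Z (x : LL) : (x.sum fun p a ↦ a • Z p.1 p.2) = x := by
  simp [Z]

theorem algebraEquiv_br (x y : LL) :
    algebraEquiv ℂ (br x y) = ⁅algebraEquiv ℂ x, algebraEquiv ℂ y⁆ := by
  conv_rhs => rw [← sum_smul_Z x, ← sum_smul_Z y]
  simp only [br, Finsupp.sum, map_sum, map_smul, algebraEquiv_zb, sum_lie, smul_lie]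
  simp only [lie_sum, lie_smul, Finset.smul_sum, mul_smul]

/-- The bilinear bracket defined on basis elements by (e1) is
bilinear, antisymmetric and satisfies the Jacobi identity; hence it makes `L_L`
into a complex Lie algebra. -/
theorem bracket_is_lie_bracket :
    (∀ x y z : LL, br (x + y) z = br x z + br y z) ∧
    (∀ (c : ℂ) (x y : LL), br (c • x) y = c • br x y) ∧
    (∀ x y z : LL, br x (y + z) = br x y + br x z) ∧
    (∀ (c : ℂ) (x y : LL), br x (c • y) = c • br x y) ∧
    (∀ x y : LL, br x y = - br y x) ∧
    (∀ x y z : LL, br (br x y) z + br (br y z) x + br (br z x) y = 0) := by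
  refine ⟨fun x y z ↦ ?_, fun c x y ↦ ?_, fun x y z ↦ ?_, fun c x y ↦ ?_, fun x y ↦ ?_,
    fun x y z ↦ ?_⟩ <;> apply (algebraEquiv ℂ).injective <;>
    simp only [algebraEquiv_br, map_add, map_smul, map_neg, map_zero]
  · exact add_lie _ _ _
  · exact smul_lie _ _ _
  · exact lie_add _ _ _
  · exact lie_smul _ _ _
  · exact (lie_skew _ _).symm
  · exact lie_lie_jacobi _ _ _
end

section
/- The degree-zero subspace l^0 = span{Z_{n,n} : n ∈ ℤ_{≥0}} is a maximal abelian Lie subalgebra of L_L: l^0 is abelian, and any element α ∈ L_L satisfying [α, Z_{k,k}] = 0 for all k ≥ 0 belongs to l^0. -/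
/-- `l^0`, the span of the diagonal elements `Z_{n,n}`, `n ≥ 0`. -/
noncomputable def lZero : Submodule ℂ LL :=
  Submodule.span ℂ {x : LL | ∃ n : ℕ, x = Z n n}

/-! The right-hand side of (e1) is the commutator `pq - qp` in the algebra of the bicyclic monoid,
in which the elements `Z_{k,k}` are commuting idempotents. For `d > 0`, the coefficient of
`[α, Z_{k,k}]` at `(k + d, k)` is the partial sum `∑_{m < k} α_{m+d,m}`. If `α` commutes with every
`Z_{k,k}`, all these partial sums vanish, hence so does every coefficient of `α` below the diagonal.
The bracket changes sign under the transposition `Z_{n,m} ↦ Z_{m,n}`, which fixes the `Z_{k,k}`, so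
the coefficients above the diagonal vanish as well. -/

/-- The product of the bicyclic monoid `⟨s, t | t s = 1⟩`, with `(n, m)` standing for the normal
form `s ^ n t ^ m`; formula (e1) is the commutator of this product. The subtractions are meant to be
truncated: at most one of the two differences is nonzero. -/
def bicyclicMul (p q : ℕ × ℕ) : ℕ × ℕ :=
  (p.1 + (q.1 - p.2), q.2 + (p.2 - q.1))

theorem bicyclicMul_diag_comm (n k : ℕ) :
    bicyclicMul (n, n) (k, k) = bicyclicMul (k, k) (n, n) := by
  grind [bicyclicMul]

theorem swap_bicyclicMul (p q : ℕ × ℕ) :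
    (bicyclicMul p q).swap = bicyclicMul q.swap p.swap :=
  rfl

theorem bicyclicMul_diag_right_eq_iff {p : ℕ × ℕ} {k d : ℕ} :
    bicyclicMul p (k, k) = (k + d, k) ↔ p.1 = p.2 + d ∧ p.2 ≤ k := by
  grind [bicyclicMul]

theorem bicyclicMul_diag_left_eq_iff {p : ℕ × ℕ} {k d : ℕ} (hd : 0 < d) :
    bicyclicMul (k, k) p = (k + d, k) ↔ p = (k + d, k) := by
  grind [bicyclicMul]

theorem single_bicyclicMul (p q : ℕ × ℕ) :
    Finsupp.single (bicyclicMul p q) 1 =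
      theta ((q.1 : ℤ) - p.2) • Z (q.1 - p.2 + p.1) q.2
        + theta ((p.2 : ℤ) - q.1) • Z p.1 (p.2 - q.1 + q.2)
        - kdelta p.2 q.1 • Z p.1 q.2 := by
  rcases lt_trichotomy p.2 q.1 with h | h | h
  · simp [bicyclicMul, theta, kdelta, Z, h.le, h.ne, h.not_ge, add_comm]
  · simp [bicyclicMul, theta, kdelta, Z, h]
  · simp [bicyclicMul, theta, kdelta, Z, h.le, h.ne', h.not_ge, add_comm]

theorem zb_eq_single_sub_single (p q : ℕ × ℕ) :
    zb p q = Finsupp.single (bicyclicMul p q) 1 - Finsupp.single (bicyclicMul q p) 1 := by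
  have kdelta_comm : kdelta q.2 p.1 = kdelta p.1 q.2 := by simp only [kdelta, eq_comm]
  rw [single_bicyclicMul, single_bicyclicMul, kdelta_comm, zb]
  abel

theorem zb_diag_diag (n k : ℕ) : zb (n, n) (k, k) = 0 := by
  rw [zb_eq_single_sub_single, bicyclicMul_diag_comm, sub_self]

theorem zb_diag_right_apply (p : ℕ × ℕ) (k : ℕ) {d : ℕ} (hd : 0 < d) :
    zb p (k, k) (k + d, k) = ∑ m ∈ Finset.range k, Finsupp.single p 1 (m + d, m) := by
  have zb_apply_eq_indicator :
      zb p (k, k) (k + d, k) = if p.1 = p.2 + d ∧ p.2 < k then 1 else 0 := by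
    rw [zb_eq_single_sub_single, Finsupp.sub_apply, Finsupp.single_apply, Finsupp.single_apply]
    simp only [bicyclicMul_diag_right_eq_iff, bicyclicMul_diag_left_eq_iff hd]
    grind
  have single_apply_eq_indicator (m : ℕ) :
      Finsupp.single p (1 : ℂ) (m + d, m) =
        if p.2 = m then if p.1 = p.2 + d then 1 else 0 else 0 := by
    grind
  simp only [zb_apply_eq_indicator, single_apply_eq_indicator, Finset.sum_ite_eq,
    Finset.mem_range]
  grind

theorem br_Z_right (x : LL) (l s : ℕ) : br x (Z l s) = x.sum fun p a => a • zb p (l, s) := by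
  simp [br, Z]

theorem br_Z_diag_apply (x : LL) (k : ℕ) {d : ℕ} (hd : 0 < d) :
    br x (Z k k) (k + d, k) = ∑ m ∈ Finset.range k, x (m + d, m) := by
  calc br x (Z k k) (k + d, k)
      = x.sum fun p a => a * zb p (k, k) (k + d, k) := by
        simp [br_Z_right]
    _ = ∑ m ∈ Finset.range k, x.sum fun p a => Finsupp.single p a (m + d, m) := by
        simp only [zb_diag_right_apply _ _ hd, Finset.mul_sum, Finsupp.sum]
        rw [Finset.sum_comm]
        simp [Finsupp.single_apply]
    _ = ∑ m ∈ Finset.range k, x (m + d, m) := by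
        simp only [← Finsupp.sum_apply, Finsupp.sum_single]

theorem apply_eq_zero_of_br_Z_diag_eq_zero {x : LL} (hx : ∀ k, br x (Z k k) = 0)
    {n k : ℕ} (h : k < n) : x (n, k) = 0 := by
  obtain ⟨d, hd, rfl⟩ := exists_pos_add_of_lt' h
  have partial_sum_eq_zero (j : ℕ) : ∑ m ∈ Finset.range j, x (m + d, m) = 0 := by
    rw [← br_Z_diag_apply x j hd, hx, Finsupp.zero_apply]
  simpa [Finset.sum_range_succ, partial_sum_eq_zero k] using partial_sum_eq_zero (k + 1)

/-- The linear involution `Z_{n,m} ↦ Z_{m,n}`, an anti-automorphism of the bracket. It exchanges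
the coefficients above the diagonal with those below it. -/
noncomputable def transpose : LL ≃ₗ[ℂ] LL :=
  Finsupp.domLCongr (Equiv.prodComm ℕ ℕ)

theorem transpose_apply (x : LL) (p : ℕ × ℕ) : transpose x p = x p.swap :=
  rfl

theorem transpose_single (p : ℕ × ℕ) (a : ℂ) :
    transpose (Finsupp.single p a) = Finsupp.single p.swap a :=
  Finsupp.domLCongr_single _ _ _

theorem transpose_Z (n m : ℕ) : transpose (Z n m) = Z m n :=
  transpose_single _ _

theorem transpose_zb (p q : ℕ × ℕ) : transpose (zb p q) = -zb p.swap q.swap := by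
  simp only [zb_eq_single_sub_single, map_sub, transpose_single, swap_bicyclicMul, neg_sub]

theorem br_transpose (x y : LL) : br (transpose x) (transpose y) = -transpose (br x y) := by
  have sum_transpose (z : LL) (f : ℕ × ℕ → ℂ → LL) :
      (transpose z).sum f = z.sum fun p a => f p.swap a :=
    Finsupp.sum_equivMapDomain _ _ _
  simp only [br, sum_transpose, map_finsuppSum, map_smul, transpose_zb]
  simp [Finsupp.sum]

theorem mem_lZero_iff {x : LL} : x ∈ lZero ↔ ∀ n m, n ≠ m → x (n, m) = 0 := by
  have lZero_eq : lZero = Finsupp.supported ℂ ℂ {p : ℕ × ℕ | p.1 = p.2} := by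
    rw [Finsupp.supported_eq_span_single, lZero]
    congr 1
    ext x
    simp [Z, eq_comm]
  rw [lZero_eq, Finsupp.mem_supported']
  simp

theorem br_eq_zero_of_mem_lZero {x y : LL} (hx : x ∈ lZero) (hy : y ∈ lZero) : br x y = 0 := by
  have fst_eq_snd {z : LL} (hz : z ∈ lZero) {p : ℕ × ℕ} (hp : p ∈ z.support) : p.1 = p.2 := by
    by_contra hne
    exact Finsupp.mem_support_iff.mp hp (mem_lZero_iff.mp hz p.1 p.2 hne)
  refine Finset.sum_eq_zero fun ⟨n, m⟩ hp => Finset.sum_eq_zero fun ⟨k, l⟩ hq => ?_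
  obtain rfl : n = m := fst_eq_snd hx hp
  obtain rfl : k = l := fst_eq_snd hy hq
  simp only [zb_diag_diag, smul_zero]

theorem mem_lZero_of_br_Z_diag_eq_zero {x : LL} (hx : ∀ k, br x (Z k k) = 0) : x ∈ lZero := by
  have hx_transpose (k : ℕ) : br (transpose x) (Z k k) = 0 := by
    rw [← transpose_Z, br_transpose, hx, map_zero, neg_zero]
  refine mem_lZero_iff.mpr fun n m hnm => ?_
  rcases hnm.lt_or_gt with h | h
  · simpa only [transpose_apply, Prod.swap_prod_mk] using
      apply_eq_zero_of_br_Z_diag_eq_zero hx_transpose h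
  · exact apply_eq_zero_of_br_Z_diag_eq_zero hx h

/-- `l^0` is a maximal abelian Lie subalgebra of `L_L`: it is
abelian, and any element commuting with all `Z_{k,k}` belongs to `l^0`. -/
theorem lZero_maximal_abelian :
    (∀ x ∈ lZero, ∀ y ∈ lZero, br x y = 0) ∧
    (∀ α : LL, (∀ k : ℕ, br α (Z k k) = 0) → α ∈ lZero) :=
  ⟨fun _ hx _ hy => br_eq_zero_of_mem_lZero hx hy, fun _ => mem_lZero_of_br_Z_diag_eq_zero⟩
end

section
/- The quotient Lie algebra C = L_L/gl_+(∞) is abelian and has a countably infinite basis given by the classes Z_n = π(Z_{n,0}) for n > 0, Z_{-n} = π(Z_{0,n}) for n > 0, and Z_0 = π(Z_{0,0}); in particular these classes are linearly independent in C. -/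
/-- The element `E_{i,j} = Z_{i,j} − Z_{i+1,j+1}` of `L_L`. -/
noncomputable def E (i j : ℕ) : LL := Z i j - Z (i + 1) (j + 1)

/-- `gl_+(∞)`, the span of the elements `E_{i,j}` (a Lie ideal of `L_L`). -/
noncomputable def glInf : Submodule ℂ LL :=
  Submodule.span ℂ {x : LL | ∃ i j : ℕ, x = E i j}

/-- The classes `Z_n ∈ C = L_L/gl_+(∞)`, `n ∈ ℤ`: `Z_n = π(Z_{n,0})` for `n ≥ 0`
and `Z_{-n} = π(Z_{0,n})` for `n > 0`. -/
noncomputable def Zbar (i : ℤ) : LL ⧸ glInf :=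
  if 0 ≤ i then glInf.mkQ (Z i.toNat 0) else glInf.mkQ (Z 0 (-i).toNat)

/-!
Give `Z n m` the degree `n - m`. Modulo `gl_+(∞)` a basis element is determined by its degree, and
every element of `gl_+(∞)` is killed by the linear map to `ℤ →₀ ℂ` that remembers only degrees, so
the quotient is `ℤ →₀ ℂ`, with `Zbar i` corresponding to `single i 1`. All six terms of `zb p q`
have the degree of `p` plus that of `q`; since `Θ(k) + Θ(-k) - δ_{k,0} = 1`, their coefficients add
up to `1 - 1 = 0`, and the bracket vanishes in the quotient.
-/

theorem theta_ne_zero_iff {k : ℤ} : theta k ≠ 0 ↔ 0 ≤ k := by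
  simp [theta]

theorem kdelta_ne_zero_iff {a b : ℕ} : kdelta a b ≠ 0 ↔ a = b := by
  simp [kdelta]

theorem theta_sub_add_theta_sub_sub_kdelta (a b : ℕ) :
    theta ((a : ℤ) - b) + theta ((b : ℤ) - a) - kdelta a b = 1 := by
  rcases lt_trichotomy a b with hab | rfl | hab
  · simp [theta, kdelta, hab.le, hab.not_ge, hab.ne]
  · simp [theta, kdelta]
  · simp [theta, kdelta, hab.le, hab.not_ge, hab.ne']

theorem E_mem_glInf (i j : ℕ) : E i j ∈ glInf :=
  Submodule.subset_span ⟨i, j, rfl⟩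

theorem mkQ_Z_add_add (n m k : ℕ) : glInf.mkQ (Z (n + k) (m + k)) = glInf.mkQ (Z n m) := by
  induction k with
  | zero => rfl
  | succ k ih =>
    rw [← ih]
    exact ((Submodule.Quotient.eq glInf).mpr (E_mem_glInf (n + k) (m + k))).symm

theorem Zbar_eq_mkQ_Z (i : ℤ) : Zbar i = glInf.mkQ (Z i.toNat (-i).toNat) := by
  rw [Zbar]
  split_ifs with hi
  · rw [Int.toNat_of_nonpos (neg_nonpos.mpr hi)]
  · rw [Int.toNat_of_nonpos (not_le.mp hi).le]

theorem mkQ_Z_eq_Zbar (n m : ℕ) : glInf.mkQ (Z n m) = Zbar ((n : ℤ) - m) :=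
  calc
    glInf.mkQ (Z n m)
      = glInf.mkQ (Z (((n : ℤ) - m).toNat + min n m) ((-((n : ℤ) - m)).toNat + min n m)) := by
        congr 2 <;> omega
    _ = Zbar ((n : ℤ) - m) := by rw [mkQ_Z_add_add, Zbar_eq_mkQ_Z]

theorem smul_mkQ_Z_eq_smul_Zbar {c : ℂ} {n m : ℕ} {d : ℤ} (h : c ≠ 0 → (n : ℤ) - m = d) :
    c • glInf.mkQ (Z n m) = c • Zbar d := by
  rcases eq_or_ne c 0 with rfl | hc
  · rw [zero_smul, zero_smul]
  · rw [mkQ_Z_eq_Zbar, h hc]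

theorem theta_smul_mkQ_Z {a b n m : ℕ} {d : ℤ} (h : b ≤ a → (n : ℤ) - m = d) :
    theta ((a : ℤ) - b) • glInf.mkQ (Z n m) = theta ((a : ℤ) - b) • Zbar d :=
  smul_mkQ_Z_eq_smul_Zbar fun hab =>
    h (Int.ofNat_le.mp (sub_nonneg.mp (theta_ne_zero_iff.mp hab)))

theorem kdelta_smul_mkQ_Z {a b n m : ℕ} {d : ℤ} (h : a = b → (n : ℤ) - m = d) :
    kdelta a b • glInf.mkQ (Z n m) = kdelta a b • Zbar d :=
  smul_mkQ_Z_eq_smul_Zbar fun hab => h (kdelta_ne_zero_iff.mp hab)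

theorem mkQ_zb_eq_zero (p q : ℕ × ℕ) : glInf.mkQ (zb p q) = 0 := by
  obtain ⟨n, m⟩ := p
  obtain ⟨l, s⟩ := q
  let d : ℤ := (n - m) + (l - s)
  calc
    glInf.mkQ (zb (n, m) (l, s))
      = theta ((l : ℤ) - m) • Zbar d - theta ((s : ℤ) - n) • Zbar d
          - theta ((n : ℤ) - s) • Zbar d + theta ((m : ℤ) - l) • Zbar d
          - kdelta m l • Zbar d + kdelta n s • Zbar d := by
        simp only [zb, map_add, map_sub, map_smul]
        rw [theta_smul_mkQ_Z, theta_smul_mkQ_Z, theta_smul_mkQ_Z, theta_smul_mkQ_Z,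
          kdelta_smul_mkQ_Z, kdelta_smul_mkQ_Z] <;> omega
    _ = (theta ((m : ℤ) - l) + theta ((l : ℤ) - m) - kdelta m l) • Zbar d
          - (theta ((n : ℤ) - s) + theta ((s : ℤ) - n) - kdelta n s) • Zbar d := by module
    _ = 0 := by simp only [theta_sub_add_theta_sub_sub_kdelta, sub_self]

theorem mkQ_br_eq_zero (x y : LL) : glInf.mkQ (br x y) = 0 := by
  simp only [br, map_finsuppSum, map_smul, mkQ_zb_eq_zero, smul_zero, Finsupp.sum_fun_zero]

/-- The linear map to `ℤ →₀ ℂ` that remembers only the degree `n - m` of each `Z n m`. It separates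
the classes `Zbar i` in the quotient by `glInf`. -/
noncomputable def degreeMap : LL →ₗ[ℂ] (ℤ →₀ ℂ) :=
  Finsupp.lmapDomain ℂ ℂ fun p : ℕ × ℕ => (p.1 : ℤ) - p.2

theorem degreeMap_Z (n m : ℕ) : degreeMap (Z n m) = Finsupp.single ((n : ℤ) - m) 1 :=
  Finsupp.mapDomain_single

theorem glInf_le_ker_degreeMap : glInf ≤ LinearMap.ker degreeMap := by
  rw [glInf, Submodule.span_le]
  rintro _ ⟨i, j, rfl⟩
  simp [E, degreeMap_Z]

theorem liftQ_degreeMap_Zbar (i : ℤ) :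
    glInf.liftQ degreeMap glInf_le_ker_degreeMap (Zbar i) = Finsupp.single i 1 := by
  rw [Zbar_eq_mkQ_Z, Submodule.mkQ_apply, Submodule.liftQ_apply, degreeMap_Z,
    Int.toNat_sub_toNat_neg]

/-- The quotient `LL ⧸ glInf` as the space of finitely supported functions of the degree. -/
noncomputable def quotientGlInfEquiv : (LL ⧸ glInf) ≃ₗ[ℂ] (ℤ →₀ ℂ) :=
  LinearEquiv.ofLinearMap (glInf.liftQ degreeMap glInf_le_ker_degreeMap)
    (Finsupp.linearCombination ℂ Zbar)
    (by
      ext i : 2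
      simp [liftQ_degreeMap_Zbar])
    (by
      ext p : 3
      simp [degreeMap, ← mkQ_Z_eq_Zbar, Z])

/-- The basis of `LL ⧸ glInf` formed by the classes `Zbar i`. -/
noncomputable def zbarBasis : Module.Basis ℤ ℂ (LL ⧸ glInf) :=
  .ofRepr quotientGlInfEquiv

theorem coe_zbarBasis : ⇑zbarBasis = Zbar := by
  ext i
  simp [zbarBasis, quotientGlInfEquiv]

/-- The quotient Lie algebra `C = L_L/gl_+(∞)` is abelian, and
the classes `Z_n`, `n ∈ ℤ`, form a (countably infinite) basis of `C`: they are
linearly independent and span `C`. -/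
theorem quotient_abelian_and_Zbar_basis :
    (∀ x y : LL, glInf.mkQ (br x y) = 0) ∧
    LinearIndependent ℂ Zbar ∧
    Submodule.span ℂ (Set.range Zbar) = ⊤ := by
  rw [← coe_zbarBasis]
  exact ⟨mkQ_br_eq_zero, zbarBasis.linearIndependent, zbarBasis.span_eq⟩
end

section
/- The linear map Y : L_L → L_L determined on basis elements by Y(Z_{n,m}) = (n − m) Z_{n,m} is a derivation of the Lie algebra L_L: Y([x, y]) = [Y(x), y] + [x, Y(y)] for all x, y ∈ L_L. -/
/-- The grading operator `Y`, determined on basis elements by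
`Y(Z_{n,m}) = (n − m) Z_{n,m}`, extended linearly. -/
noncomputable def Ymap (x : LL) : LL :=
  x.sum fun p a => (a * ((p.1 : ℂ) - (p.2 : ℂ))) • Z p.1 p.2

/-! Put `(n, m)` in degree `n - m`, so that `Y` multiplies each `Z_{n,m}` by its degree. Every
term of formula (e1) with a nonzero coefficient has degree `(n - m) + (l - s)`: the bracket adds
degrees, and this additivity of eigenvalues is the Leibniz rule on basis elements. -/

theorem leibniz_of_span_eigenvectors {ι R M : Type*} [CommSemiring R] [AddCommMonoid M]
    [Module R M] {v : ι → M} {w : ι → R} {D : M →ₗ[R] M} {B : M →ₗ[R] M →ₗ[R] M}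
    (hv : Submodule.span R (Set.range v) = ⊤) (hD : ∀ i, D (v i) = w i • v i)
    (hB : ∀ i j, D (B (v i) (v j)) = (w i + w j) • B (v i) (v j)) (x y : M) :
    D (B x y) = B (D x) y + B x (D y) := by
  have leibniz : B.compr₂ D = B ∘ₗ D + B.compl₂ D :=
    LinearMap.ext_on_range hv fun i => LinearMap.ext_on_range hv fun j => by
      simp [hD, hB, add_smul]
  exact LinearMap.congr_fun₂ leibniz x y

/-- The degree of `Z_{n,m}`, which is its `Y`-eigenvalue. It is an integer, rather than a complex
number, so that identities between degrees are linear integer arithmetic. -/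
def degree (p : ℕ × ℕ) : ℤ := p.1 - p.2

/-- The grading operator `Y` as a linear map, so that its eigenspaces are available. -/
noncomputable def gradingLinearMap : LL →ₗ[ℂ] LL :=
  Finsupp.linearCombination ℂ fun p => (degree p : ℂ) • Z p.1 p.2

/-- The bracket of `L_L` as a bilinear map, so that it is determined by its values on the basis. -/
noncomputable def bracketBilinear : LL →ₗ[ℂ] LL →ₗ[ℂ] LL :=
  Finsupp.linearCombination ℂ fun p => Finsupp.linearCombination ℂ (zb p)

theorem gradingLinearMap_apply (x : LL) : gradingLinearMap x = Ymap x := by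
  simp [gradingLinearMap, Ymap, degree, Finsupp.linearCombination_apply, smul_smul]

theorem bracketBilinear_apply (x y : LL) : bracketBilinear x y = br x y := by
  simp [bracketBilinear, br, Finsupp.linearCombination_apply, LinearMap.finsupp_sum_apply,
    Finsupp.smul_sum, smul_smul]

theorem bracketBilinear_Z (p q : ℕ × ℕ) :
    bracketBilinear (Z p.1 p.2) (Z q.1 q.2) = zb p q := by
  simp [bracketBilinear, Z]

theorem span_range_Z : Submodule.span ℂ (Set.range fun p : ℕ × ℕ => Z p.1 p.2) = ⊤ := by
  simpa [Z] using (Finsupp.basisSingleOne (R := ℂ) (ι := ℕ × ℕ)).span_eq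

theorem gradingLinearMap_Z (p : ℕ × ℕ) :
    gradingLinearMap (Z p.1 p.2) = (degree p : ℂ) • Z p.1 p.2 := by
  simp [gradingLinearMap, Z]

theorem Z_mem_eigenspace {n m : ℕ} {d : ℤ} (h : degree (n, m) = d) :
    Z n m ∈ Module.End.eigenspace gradingLinearMap (d : ℂ) :=
  Module.End.mem_eigenspace_iff.mpr (h ▸ gradingLinearMap_Z (n, m))

section Coefficients

variable {M : Type*} [AddCommMonoid M] [Module ℂ M] {S : Submodule ℂ M} {v : M}

theorem theta_smul_mem {k : ℤ} (h : 0 ≤ k → v ∈ S) : theta k • v ∈ S := by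
  unfold theta
  split_ifs with hk
  · simpa using h hk
  · simp

theorem kdelta_smul_mem {a b : ℕ} (h : a = b → v ∈ S) : kdelta a b • v ∈ S := by
  unfold kdelta
  split_ifs with hab
  · simpa using h hab
  · simp

end Coefficients

theorem zb_mem_eigenspace (p q : ℕ × ℕ) :
    zb p q ∈ Module.End.eigenspace gradingLinearMap ((degree p + degree q : ℤ) : ℂ) := by
  unfold zb
  refine add_mem (sub_mem (add_mem (sub_mem (sub_mem (theta_smul_mem ?_) (theta_smul_mem ?_))
    (theta_smul_mem ?_)) (theta_smul_mem ?_)) (kdelta_smul_mem ?_)) (kdelta_smul_mem ?_)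
  -- A nonzero coefficient rules out truncation in the index, which makes the degree exact.
  all_goals
    intro h
    apply Z_mem_eigenspace
    simp only [degree]
    omega

theorem gradingLinearMap_bracketBilinear_Z (p q : ℕ × ℕ) :
    gradingLinearMap (bracketBilinear (Z p.1 p.2) (Z q.1 q.2)) =
      ((degree p : ℂ) + degree q) • bracketBilinear (Z p.1 p.2) (Z q.1 q.2) := by
  rw [bracketBilinear_Z, ← Int.cast_add]
  exact Module.End.mem_eigenspace_iff.mp (zb_mem_eigenspace p q)

/-- `Y` is a derivation of the Lie algebra `L_L`:
`Y([x, y]) = [Y(x), y] + [x, Y(y)]`. -/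
theorem Ymap_is_derivation :
    ∀ x y : LL, Ymap (br x y) = br (Ymap x) y + br x (Ymap y) := by
  intro x y
  simpa only [gradingLinearMap_apply, bracketBilinear_apply] using
    leibniz_of_span_eigenvectors span_range_Z gradingLinearMap_Z
      gradingLinearMap_bracketBilinear_Z x y
end

section
/- Let φ : L_L → ℂ be a linear functional that vanishes on all brackets (φ([x,y]) = 0 for all x, y ∈ L_L) and that is invariant under the grading derivation, i.e. φ((n−m) Z_{n,m}) = 0 for all n, m. Then φ(Z_{n,m}) = φ(Z_{0,0}) · δ_{n,m} for all n, m ∈ ℤ_{≥0}; in particular the space of such functionals is one-dimensional. -/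
@[simp]
theorem theta_zero : theta 0 = 1 := if_pos le_rfl

@[simp]
theorem kdelta_self (n : ℕ) : kdelta n n = 1 := if_pos rfl

theorem kdelta_of_ne {n m : ℕ} (h : n ≠ m) : kdelta n m = 0 := if_neg h

theorem br_Z_Z (n m l s : ℕ) : br (Z n m) (Z l s) = zb (n, m) (l, s) := by
  simp [br, Z]

theorem br_Z_Z_swap (n m : ℕ) : br (Z n m) (Z m n) = Z n n - Z m m := by
  simp only [br_Z_Z, zb, sub_self, theta_zero, kdelta_self, one_smul, Nat.sub_self, Nat.zero_add]
  abel

theorem map_Z_self_eq_of_map_br_eq_zero {F M : Type*} [AddGroup M] [FunLike F LL M]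
    [AddMonoidHomClass F LL M] (φ : F) (hbr : ∀ x y : LL, φ (br x y) = 0) (n m : ℕ) :
    φ (Z n n) = φ (Z m m) := by
  rw [← sub_eq_zero, ← map_sub, ← br_Z_Z_swap, hbr]

section

variable {M : Type*} [AddCommGroup M] [Module ℂ M] (φ : LL →ₗ[ℂ] M)

theorem map_Z_eq_zero_of_ne {n m : ℕ} (hY : φ (((n : ℂ) - (m : ℂ)) • Z n m) = 0) (h : n ≠ m) :
    φ (Z n m) = 0 := by
  have hnm : (n : ℂ) - m ≠ 0 := sub_ne_zero.mpr (Nat.cast_injective.ne h)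
  rwa [map_smul, smul_eq_zero_iff_right hnm] at hY

theorem invariant_functional_eq_delta_mul_general
    (hbr : ∀ x y : LL, φ (br x y) = 0)
    (hY : ∀ n m : ℕ, φ (((n : ℂ) - (m : ℂ)) • Z n m) = 0) (n m : ℕ) :
    φ (Z n m) = kdelta n m • φ (Z 0 0) := by
  obtain rfl | h := eq_or_ne n m
  · rw [kdelta_self, one_smul, map_Z_self_eq_of_map_br_eq_zero φ hbr n 0]
  · rw [kdelta_of_ne h, zero_smul, map_Z_eq_zero_of_ne φ (hY n m) h]

end

/-- If a linear functional `φ : L_L → ℂ` vanishes on all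
brackets and is invariant under the grading derivation
(`φ((n−m) Z_{n,m}) = 0` for all `n, m`), then `φ(Z_{n,m}) = δ_{n,m} φ(Z_{0,0})`;
in particular the space of such functionals is one-dimensional. -/
theorem invariant_functional_eq_delta_mul (φ : LL →ₗ[ℂ] ℂ)
    (hbr : ∀ x y : LL, φ (br x y) = 0)
    (hY : ∀ n m : ℕ, φ ((((n : ℂ) - (m : ℂ))) • Z n m) = 0) :
    ∀ n m : ℕ, φ (Z n m) = kdelta n m * φ (Z 0 0) :=
  invariant_functional_eq_delta_mul_general φ hbr hY
end

section
/- The first cohomology group of L_L with trivial complex coefficients is infinite dimensional: the vector space of linear functionals φ : L_L → ℂ satisfying φ([x,y]) = 0 for all x, y ∈ L_L is infinite dimensional. -/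
/-- The space of linear functionals on `L_L` vanishing on all brackets; with
trivial coefficients this space computes `H¹(L_L, ℂ)`. -/
noncomputable def H1space : Submodule ℂ (LL →ₗ[ℂ] ℂ) where
  carrier := {φ | ∀ x y : LL, φ (br x y) = 0}
  add_mem' := by
    intro φ ψ hφ hψ x y
    simp [hφ x y, hψ x y]
  zero_mem' := by intro x y; simp
  smul_mem' := by
    intro c φ hφ x y
    simp [hφ x y]

/-! The bracket (e1) is the commutator of the monoid algebra of the bicyclic monoid: writing
`Z_{n,m}` for the normal form `b ^ n * a ^ m` in the monoid `⟨a, b ∣ a * b = 1⟩`, one has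
`[Z_p, Z_q] = Z_{p * q} - Z_{q * p}`. The degree `(n, m) ↦ n - m` is a homomorphism to the
commutative group `ℤ`, so it takes the same value on `p * q` and on `q * p`. Hence for every
`f : ℤ → ℂ` the functional `Z_p ↦ f (degree p)` vanishes on brackets, and these functionals form a
copy of the infinite dimensional space `ℤ → ℂ` inside `H¹`. -/

namespace LL

/-- The product of the bicyclic monoid `⟨a, b ∣ a * b = 1⟩`, with `(n, m)` encoding the normal form
`b ^ n * a ^ m`; it gives the indices in the bracket (e1). The subtractions are truncated, so that
at least one of the two differences is `0`. -/
def bicyclicMul (p q : ℕ × ℕ) : ℕ × ℕ :=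
  (q.1 - p.2 + p.1, p.2 - q.1 + q.2)

/-- The degree `n - m` of the basis element `Z_{n,m}`, for which the bracket is graded. -/
def degree (p : ℕ × ℕ) : ℤ := (p.1 : ℤ) - p.2

lemma degree_bicyclicMul (p q : ℕ × ℕ) : degree (bicyclicMul p q) = degree p + degree q := by
  simp only [degree, bicyclicMul]
  omega

lemma degree_surjective : Function.Surjective degree := fun k =>
  ⟨(k.toNat, (-k).toNat), Int.toNat_sub_toNat_neg k⟩

lemma Z_bicyclicMul (n m l s : ℕ) :
    Z (bicyclicMul (n, m) (l, s)).1 (bicyclicMul (n, m) (l, s)).2 =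
      theta ((l : ℤ) - m) • Z (l - m + n) s + theta ((m : ℤ) - l) • Z n (m - l + s)
        - kdelta m l • Z n s := by
  rcases lt_trichotomy m l with h | rfl | h
  · simp [bicyclicMul, theta, kdelta, h.le, h.ne, h.not_ge, Nat.sub_eq_zero_of_le h.le]
  · simp [bicyclicMul, theta, kdelta]
  · simp [bicyclicMul, theta, kdelta, h.le, h.ne', h.not_ge, Nat.sub_eq_zero_of_le h.le]

lemma zb_eq_Z_bicyclicMul_sub (p q : ℕ × ℕ) :
    zb p q = Z (bicyclicMul p q).1 (bicyclicMul p q).2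
      - Z (bicyclicMul q p).1 (bicyclicMul q p).2 := by
  obtain ⟨n, m⟩ := p
  obtain ⟨l, s⟩ := q
  have kdelta_symm : kdelta s n = kdelta n s := by simp only [kdelta, eq_comm]
  rw [Z_bicyclicMul, Z_bicyclicMul, kdelta_symm, zb]
  abel

lemma mem_H1space_of_forall_zb {φ : LL →ₗ[ℂ] ℂ} (h : ∀ p q, φ (zb p q) = 0) : φ ∈ H1space := by
  intro x y
  simp [br, map_finsuppSum, h]

/-- The functional `Z_{n,m} ↦ f (n - m)` attached to `f : ℤ → ℂ`, as a linear function of `f`. -/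
noncomputable def degreeFunctional : (ℤ → ℂ) →ₗ[ℂ] (LL →ₗ[ℂ] ℂ) :=
  (Finsupp.llift ℂ ℂ ℂ (ℕ × ℕ)).toLinearMap ∘ₗ LinearMap.funLeft ℂ ℂ degree

lemma degreeFunctional_Z (f : ℤ → ℂ) (n m : ℕ) :
    degreeFunctional f (Z n m) = f (degree (n, m)) := by
  simp [degreeFunctional, Z]

lemma degreeFunctional_injective : Function.Injective degreeFunctional :=
  (Finsupp.llift ℂ ℂ ℂ (ℕ × ℕ)).injective.comp
    (LinearMap.funLeft_injective_of_surjective ℂ ℂ degree degree_surjective)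

lemma degreeFunctional_mem_H1space (f : ℤ → ℂ) : degreeFunctional f ∈ H1space := by
  refine mem_H1space_of_forall_zb fun p q => ?_
  rw [zb_eq_Z_bicyclicMul_sub, map_sub, degreeFunctional_Z, degreeFunctional_Z, degree_bicyclicMul,
    degree_bicyclicMul, add_comm, sub_self]

end LL

/-- `H¹(L_L, ℂ)` is infinite dimensional: the space of linear
functionals on `L_L` vanishing on all brackets is not finite dimensional. -/
theorem H1_infinite_dimensional : ¬ Module.Finite ℂ H1space := by
  intro _
  have embedding_injective : Function.Injective
      (LL.degreeFunctional.codRestrict H1space LL.degreeFunctional_mem_H1space) :=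
    (LinearMap.injective_codRestrict_iff ..).2 LL.degreeFunctional_injective
  have : Module.Finite ℂ (ℤ → ℂ) := .of_injective _ embedding_injective
  have : Finite ℤ := (Pi.linearIndependent_single_one ℤ ℂ).finite_of_isNoetherian
  exact not_finite ℤ
end
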